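/- arXiv:2404.14793 — 2 statements merged into one kernel-verified Lean document; each statement's English description precedes it below -/
import Mathlib

section
/- Let Ω ⊂ ℂⁿ be a bounded domain, φ : Ω → ℝ continuous, and let (e_j)_{j∈ℕ} be a Hilbert basis (complete orthonormal system) of the weighted Bergman space H(φ). Let g : Ω → ℝ be continuous with compact support in Ω. Then the series Σ_j ⟨P_φ(g·e_j), e_j⟩_φ converges absolutely and equals ∫_Ω (Σ_j |e_j(z)|²) g(z) e^{−φ(z)} dλ(z), which is finite; i.e., the trace of the Toeplitz operator T_{φ,g} on H(φ) equals ∫_Ω K_φ(z,z) g(z) e^{−φ(z)} dλ(z). -/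
open MeasureTheory Complex Filter
open scoped ENNReal Topology BigOperators Real ComplexOrder

noncomputable section

variable {n : ℕ}

/-- Wirtinger derivative `∂f/∂z_j` of a function on `ℂⁿ`. -/
def wDeriv (f : (Fin n → ℂ) → ℂ) (j : Fin n) (z : Fin n → ℂ) : ℂ :=
  (1/2) * (fderiv ℝ f z (Pi.single j 1) - Complex.I * fderiv ℝ f z (Pi.single j Complex.I))

/-- Wirtinger derivative `∂f/∂z̄_j` of a function on `ℂⁿ`. -/
def wDerivBar (f : (Fin n → ℂ) → ℂ) (j : Fin n) (z : Fin n → ℂ) : ℂ :=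
  (1/2) * (fderiv ℝ f z (Pi.single j 1) + Complex.I * fderiv ℝ f z (Pi.single j Complex.I))

/-- Complex Hessian `H_φ(z) = (∂²φ/∂z_j∂z̄_k)_{j,k}` of a real-valued function on `ℂⁿ`. -/
def cHessian (φ : (Fin n → ℂ) → ℝ) (z : Fin n → ℂ) : Matrix (Fin n) (Fin n) ℂ :=
  Matrix.of fun j k => wDerivBar (fun w => wDeriv (fun v => (φ v : ℂ)) j w) k z

/-- A function is plurisubharmonic on `Ω` if it is upper semicontinuous on `Ω` and satisfies
the sub-mean value inequality on every closed complex disc contained in `Ω`. -/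
def PlurisubharmonicOn (Ω : Set (Fin n → ℂ)) (f : (Fin n → ℂ) → ℝ) : Prop :=
  UpperSemicontinuousOn f Ω ∧
  ∀ a b : Fin n → ℂ, (∀ ζ : ℂ, ‖ζ‖ ≤ 1 → a + ζ • b ∈ Ω) →
    f a ≤ (2 * π)⁻¹ * ∫ θ in (0:ℝ)..(2*π), f (a + Complex.exp (θ * Complex.I) • b)

/-- A (bounded) open set `Ω ⊆ ℂⁿ` is pseudoconvex iff `z ↦ -log dist(z, Ωᶜ)` is
plurisubharmonic on `Ω`. -/
def Pseudoconvex (Ω : Set (Fin n → ℂ)) : Prop :=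
  PlurisubharmonicOn Ω fun z => -Real.log (Metric.infDist z Ωᶜ)

/-- `φ ∈ SPSH(Ω)`: smooth on `Ω` with positive definite complex Hessian at every point of `Ω`. -/
def SPSHOn (Ω : Set (Fin n → ℂ)) (φ : (Fin n → ℂ) → ℝ) : Prop :=
  ContDiffOn ℝ (⊤ : ℕ∞) φ Ω ∧ ∀ z ∈ Ω, (cHessian φ z).PosDef

/-- Squared weighted Bergman norm `∫_Ω |f|² e^{-ψ} dλ` (as an extended real,
so that finiteness encodes square-integrability). -/
def wnorm2 (Ω : Set (Fin n → ℂ)) (ψ : (Fin n → ℂ) → ℝ) (f : (Fin n → ℂ) → ℂ) : ℝ≥0∞ :=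
  ∫⁻ z in Ω, ENNReal.ofReal (‖f z‖ ^ 2 * Real.exp (-ψ z))

/-- Membership in the weighted Bergman space `H(ψ)`: holomorphic on `Ω` and
`∫_Ω |f|² e^{-ψ} dλ < ∞`. -/
def MemBergman (Ω : Set (Fin n → ℂ)) (ψ : (Fin n → ℂ) → ℝ) (f : (Fin n → ℂ) → ℂ) : Prop :=
  DifferentiableOn ℂ f Ω ∧ wnorm2 Ω ψ f < ⊤

/-- The diagonal of the Bergman kernel of `H(ψ)`:
`B_ψ(z) = sup {|f(z)|² : f ∈ H(ψ), ‖f‖_ψ ≤ 1}`. -/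
def bergmanDiag (Ω : Set (Fin n → ℂ)) (ψ : (Fin n → ℂ) → ℝ) (z : Fin n → ℂ) : ℝ :=
  sSup {t : ℝ | ∃ f, DifferentiableOn ℂ f Ω ∧ wnorm2 Ω ψ f ≤ 1 ∧ t = ‖f z‖ ^ 2}

/-- Weighted inner product `⟨f,g⟩_ψ = ∫_Ω f ḡ e^{-ψ} dλ`. -/
def wInner (Ω : Set (Fin n → ℂ)) (ψ : (Fin n → ℂ) → ℝ) (f g : (Fin n → ℂ) → ℂ) : ℂ :=
  ∫ z in Ω, f z * (starRingEnd ℂ) (g z) * Real.exp (-ψ z)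

/-- Mixed determinants `D_j(A,B)`, defined so that
`det (s•A + r•B) = ∑_j (n choose j) s^j r^(n-j) D_j(A,B)`: explicitly `D_j(A,B)` is
`(n choose j)⁻¹` times the sum over all `j`-element subsets `S` of the row indices of the
determinant of the matrix whose rows are those of `A` on `S` and those of `B` elsewhere. -/
def mixedDet (A B : Matrix (Fin n) (Fin n) ℂ) (j : ℕ) : ℂ :=
  ((n.choose j : ℂ))⁻¹ *
    ∑ S ∈ Finset.univ.powersetCard j,
      Matrix.det (Matrix.of fun i k => if i ∈ S then A i k else B i k)

/-!
The weighted mean value inequality for holomorphic functions bounds `|f(a)|²` by a constant times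
`‖f‖²_φ`, uniformly for `a` in a compact `K ⊆ Ω`. Applied to the partial kernels
`∑_{j ∈ s} conj(e_j(a)) e_j`, whose value at `a` and squared norm both equal
`∑_{j ∈ s} |e_j(a)|²`, it bounds these sums on `K` uniformly in `s`. With `K = supp g`, this bound
times `|g| e^{-φ}` is an integrable majorant, and the series may be integrated term by term.
-/

section MeanValue

open Metric

variable {E F : Type*} [NormedAddCommGroup E] [NormedAddCommGroup F] [NormedSpace ℂ F]

theorem add_smul_mem_closedBall [NormedSpace ℂ E] {a x : E} {r : ℝ} {ζ : ℂ} (hζ : ‖ζ‖ ≤ 1)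
    (hx : ‖x‖ ≤ r) : a + ζ • x ∈ closedBall a r := by
  simpa [norm_smul] using (mul_le_of_le_one_left (norm_nonneg x) hζ).trans hx

theorem circleAverage_add_smul_of_differentiableOn [NormedSpace ℂ E] [CompleteSpace F]
    {f : E → F} {a x : E} {r : ℝ} (hf : DifferentiableOn ℂ f (closedBall a r)) (hx : ‖x‖ ≤ r) :
    Real.circleAverage (fun ζ ↦ f (a + ζ • x)) 0 1 = f a := by
  have hline : DifferentiableOn ℂ (fun ζ : ℂ ↦ f (a + ζ • x)) (closedBall 0 |1|) :=
    hf.comp (f := fun ζ : ℂ ↦ a + ζ • x) (by fun_prop) fun ζ hζ ↦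
      add_smul_mem_closedBall (by simpa using hζ) hx
  simpa using (hline.diffContOnCl_ball subset_rfl).circleAverage

variable [MeasurableSpace E] [BorelSpace E]

theorem measurePreserving_linearIsometryEquiv [NormedSpace ℝ E] [FiniteDimensional ℝ E]
    (μ : Measure E) [μ.IsAddHaarMeasure] (L : E ≃ₗᵢ[ℝ] E) : MeasurePreserving L μ μ := by
  have hmap : μ.map L = ENNReal.ofReal |(LinearMap.det (L.toLinearEquiv : E →ₗ[ℝ] E))⁻¹| • μ :=
    Measure.map_linearMap_addHaar_eq_smul_addHaar μ L.toLinearEquiv.isUnit_det'.ne_zero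
  have hball : μ.map L (closedBall 0 1) = μ (closedBall 0 1) := by
    rw [Measure.map_apply L.continuous.measurable measurableSet_closedBall, L.preimage_closedBall,
      map_zero]
  have hscale : ENNReal.ofReal |(LinearMap.det (L.toLinearEquiv : E →ₗ[ℝ] E))⁻¹| = 1 := by
    have := FiniteDimensional.proper_real E
    rw [hmap, Measure.smul_apply, smul_eq_mul] at hball
    exact (ENNReal.mul_eq_right (measure_closedBall_pos μ 0 one_pos).ne'
      measure_closedBall_lt_top.ne).1 hball
  exact ⟨L.continuous.measurable, by rw [hmap, hscale, one_smul]⟩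

variable [NormedSpace ℂ E] [FiniteDimensional ℂ E] (μ : Measure E) [μ.IsAddHaarMeasure]

theorem setIntegral_closedBall_comp_smul {c : ℂ} (hc : ‖c‖ = 1) (f : E → F) (r : ℝ) :
    ∫ x in closedBall 0 r, f (c • x) ∂μ = ∫ x in closedBall 0 r, f x ∂μ := by
  have hc₀ : c ≠ 0 := norm_ne_zero_iff.1 (hc ▸ one_ne_zero)
  let L : E ≃ₗᵢ[ℝ] E :=
    { (LinearEquiv.smulOfNeZero ℂ E c hc₀).restrictScalars ℝ with
      norm_map' x := by simp [norm_smul, hc] }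
  have hpre : L ⁻¹' closedBall 0 r = closedBall 0 r := by rw [L.preimage_closedBall, map_zero]
  rw [← (measurePreserving_linearIsometryEquiv μ L).setIntegral_preimage_emb
    L.toHomeomorph.measurableEmbedding f, hpre]
  rfl

variable [CompleteSpace F]

theorem setIntegral_circleAverage_comm {α : Type*} [MeasurableSpace α] {ν : Measure α} [SFinite ν]
    {G : Type*} [NormedAddCommGroup G] [NormedSpace ℝ G]
    {s : Set α} {f : ℂ → α → G} {c : ℂ} {R : ℝ}
    (hf : IntegrableOn (fun p : ℝ × α ↦ f (circleMap c R p.1) p.2) (Set.uIoc 0 (2 * π) ×ˢ s)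
      (volume.prod ν)) :
    ∫ x in s, Real.circleAverage (f · x) c R ∂ν =
      Real.circleAverage (fun ζ ↦ ∫ x in s, f ζ x ∂ν) c R := by
  simp only [Real.circleAverage_def, integral_smul]
  rw [IntegrableOn, ← Measure.prod_restrict] at hf
  rw [intervalIntegral_integral_swap hf]

theorem setIntegral_closedBall_of_differentiableOn {f : E → F} {a : E} {r : ℝ}
    (hf : DifferentiableOn ℂ f (closedBall a r)) :
    ∫ z in closedBall a r, f z ∂μ = μ.real (closedBall a r) • f a := by
  have := FiniteDimensional.proper_rclike ℂ E
  have hint : IntegrableOn (fun p : ℝ × E ↦ f (a + circleMap 0 1 p.1 • p.2))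
      (Set.uIoc 0 (2 * π) ×ˢ closedBall 0 r) (volume.prod μ) := by
    have hcont : ContinuousOn (fun p : ℝ × E ↦ f (a + circleMap 0 1 p.1 • p.2))
        (Set.uIcc 0 (2 * π) ×ˢ closedBall 0 r) :=
      hf.continuousOn.comp (f := fun p : ℝ × E ↦ a + circleMap 0 1 p.1 • p.2)
        (by fun_prop) fun p hp ↦
          add_smul_mem_closedBall (by simp) (mem_closedBall_zero_iff.1 hp.2)
    exact (hcont.integrableOn_compact (isCompact_uIcc.prod (isCompact_closedBall 0 r))).mono_set
      (Set.prod_mono_left Set.uIoc_subset_uIcc)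
  have hpre : (a + ·) ⁻¹' closedBall a r = closedBall 0 r := by ext; simp
  calc
    _ = ∫ x in closedBall 0 r, f (a + x) ∂μ := by
      rw [← hpre, (measurePreserving_add_left μ a).setIntegral_preimage_emb
        (measurableEmbedding_addLeft a)]
    _ = Real.circleAverage (fun ζ ↦ ∫ x in closedBall 0 r, f (a + ζ • x) ∂μ) 0 1 :=
      .symm <| Real.circleAverage_const_on_circle fun ζ hζ ↦
        setIntegral_closedBall_comp_smul μ (by simpa using hζ) (fun x ↦ f (a + x)) r
    _ = ∫ x in closedBall 0 r, Real.circleAverage (fun ζ ↦ f (a + ζ • x)) 0 1 ∂μ :=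
      (setIntegral_circleAverage_comm (f := fun ζ x ↦ f (a + ζ • x)) hint).symm
    _ = ∫ _ in closedBall 0 r, f a ∂μ :=
      setIntegral_congr_fun measurableSet_closedBall fun x hx ↦
        circleAverage_add_smul_of_differentiableOn hf (mem_closedBall_zero_iff.1 hx)
    _ = μ.real (closedBall a r) • f a := by
      rw [setIntegral_const, measureReal_def, measureReal_def,
        Measure.addHaar_closedBall_center μ a]

theorem measureReal_closedBall_mul_norm_pow_le {f : E → ℂ} {a : E} {r : ℝ}
    (hf : DifferentiableOn ℂ f (closedBall a r)) (p : ℕ) :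
    μ.real (closedBall a r) * ‖f a‖ ^ p ≤ ∫ z in closedBall a r, ‖f z‖ ^ p ∂μ := calc
  _ = ‖∫ z in closedBall a r, f z ^ p ∂μ‖ := by
    rw [setIntegral_closedBall_of_differentiableOn μ (hf.fun_pow p), norm_smul, norm_pow,
      Real.norm_of_nonneg measureReal_nonneg]
  _ ≤ _ := (norm_integral_le_integral_norm _).trans_eq <| by simp only [norm_pow]

theorem exists_norm_pow_le_mul_setIntegral {Ω K : Set E} (hΩ : IsOpen Ω) (hK : IsCompact K)
    (hKΩ : K ⊆ Ω) {w : E → ℝ} (hw : ContinuousOn w Ω) (hw₀ : ∀ z ∈ Ω, 0 < w z) (p : ℕ) :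
    ∃ C > 0, ∀ f : E → ℂ, DifferentiableOn ℂ f Ω → IntegrableOn (fun z ↦ ‖f z‖ ^ p * w z) Ω μ →
      ∀ a ∈ K, ‖f a‖ ^ p ≤ C * ∫ z in Ω, ‖f z‖ ^ p * w z ∂μ := by
  have := FiniteDimensional.proper_rclike ℂ E
  obtain ⟨r, hr, hrΩ⟩ := hK.exists_cthickening_subset_open hΩ hKΩ
  obtain ⟨m, hm, hmw⟩ := hK.cthickening.exists_forall_le' (hw.mono hrΩ)
    fun z hz ↦ hw₀ z (hrΩ hz)
  have hvol : 0 < μ.real (closedBall 0 r) :=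
    ENNReal.toReal_pos (measure_closedBall_pos μ 0 hr).ne' measure_closedBall_lt_top.ne
  refine ⟨(m * μ.real (closedBall 0 r))⁻¹, by positivity, fun f hf hfw a ha ↦ ?_⟩
  have hball : closedBall a r ⊆ cthickening r K := closedBall_subset_cthickening ha r
  have hballΩ : closedBall a r ⊆ Ω := hball.trans hrΩ
  rw [le_inv_mul_iff₀ (by positivity)]
  calc m * μ.real (closedBall 0 r) * ‖f a‖ ^ p
    _ = m * (μ.real (closedBall a r) * ‖f a‖ ^ p) := by
      rw [mul_assoc, measureReal_def, measureReal_def, Measure.addHaar_closedBall_center μ a]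
    _ ≤ m * ∫ z in closedBall a r, ‖f z‖ ^ p ∂μ := by
      gcongr
      exact measureReal_closedBall_mul_norm_pow_le μ (hf.mono hballΩ) p
    _ = ∫ z in closedBall a r, m * ‖f z‖ ^ p ∂μ := (integral_const_mul _ _).symm
    _ ≤ ∫ z in closedBall a r, ‖f z‖ ^ p * w z ∂μ := by
      refine setIntegral_mono_on ?_ (hfw.mono_set hballΩ) measurableSet_closedBall fun z hz ↦ ?_
      · exact ContinuousOn.integrableOn_compact (isCompact_closedBall a r)
          (((hf.continuousOn.mono hballΩ).norm.pow p).const_mul m)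
      · rw [mul_comm]
        gcongr
        exact hmw z (hball hz)
    _ ≤ ∫ z in Ω, ‖f z‖ ^ p * w z ∂μ := by
      refine setIntegral_mono_set hfw ?_ hballΩ.eventuallyLE
      filter_upwards [ae_restrict_mem hΩ.measurableSet] with z hz
      exact mul_nonneg (by positivity) (hw₀ z hz).le

end MeanValue

section WeightedSeries

variable {α ι E : Type*} [NormedAddCommGroup E] [NormedSpace ℝ E] {C : ℝ}

theorem sum_norm_smul_le {q : ι → ℝ} (hq : ∀ i, 0 ≤ q i) {v : E}
    (hC : v ≠ 0 → ∀ s : Finset ι, ∑ i ∈ s, q i ≤ C) (s : Finset ι) :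
    ∑ i ∈ s, ‖q i • v‖ ≤ C * ‖v‖ := by
  rcases eq_or_ne v 0 with rfl | hv
  · simp
  · simp only [norm_smul, Real.norm_of_nonneg (hq _), ← Finset.sum_mul]
    gcongr
    exact hC hv s

theorem tsum_smul_const_of_sum_le {q : ι → ℝ} (hq : ∀ i, 0 ≤ q i) {v : E}
    (hC : v ≠ 0 → ∀ s : Finset ι, ∑ i ∈ s, q i ≤ C) :
    ∑' i, q i • v = (∑' i, q i) • v := by
  rcases eq_or_ne v 0 with rfl | hv
  · simp
  · exact (summable_of_sum_le hq (hC hv)).tsum_smul_const v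

variable [MeasurableSpace α] {μ : Measure α} {p : ι → α → ℝ} {w : α → E}

theorem integrable_smul_of_sum_le (hp : ∀ i x, 0 ≤ p i x)
    (hpm : ∀ i, AEStronglyMeasurable (p i) μ) (hw : Integrable w μ)
    (hC : ∀ x, w x ≠ 0 → ∀ s : Finset ι, ∑ i ∈ s, p i x ≤ C) (i : ι) :
    Integrable (fun x ↦ p i x • w x) μ :=
  (hw.norm.const_mul C).mono' ((hpm i).smul hw.1) <| .of_forall fun x ↦ by
    simpa using sum_norm_smul_le (hp · x) (hC x) {i}

theorem summable_integral_norm_smul_of_sum_le (hp : ∀ i x, 0 ≤ p i x)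
    (hpm : ∀ i, AEStronglyMeasurable (p i) μ) (hw : Integrable w μ)
    (hC : ∀ x, w x ≠ 0 → ∀ s : Finset ι, ∑ i ∈ s, p i x ≤ C) :
    Summable fun i ↦ ∫ x, ‖p i x • w x‖ ∂μ := by
  have hint i := (integrable_smul_of_sum_le hp hpm hw hC i).norm
  refine summable_of_sum_le (c := ∫ x, C * ‖w x‖ ∂μ)
    (fun i ↦ integral_nonneg fun x ↦ norm_nonneg _) fun s ↦ ?_
  rw [← integral_finsetSum s fun i _ ↦ hint i]
  exact integral_mono (integrable_finsetSum s fun i _ ↦ hint i) (hw.norm.const_mul C)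
    fun x ↦ sum_norm_smul_le (hp · x) (hC x) s

theorem integrable_tsum_smul_of_sum_le [Countable ι] (hp : ∀ i x, 0 ≤ p i x)
    (hpm : ∀ i, AEStronglyMeasurable (p i) μ) (hw : Integrable w μ)
    (hC : ∀ x, w x ≠ 0 → ∀ s : Finset ι, ∑ i ∈ s, p i x ≤ C) :
    Integrable (fun x ↦ (∑' i, p i x) • w x) μ := by
  have hmeas : AEStronglyMeasurable (fun x ↦ ∑' i, p i x) μ :=
    (AEMeasurable.tsum fun i ↦ (hpm i).aemeasurable).aestronglyMeasurable
  refine (hw.norm.const_mul C).mono' (hmeas.smul hw.1) <| .of_forall fun x ↦ ?_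
  rcases eq_or_ne (w x) 0 with h | h
  · simp [h]
  · rw [norm_smul, Real.norm_of_nonneg (tsum_nonneg (hp · x))]
    gcongr
    exact Real.tsum_le_of_sum_le (hp · x) (hC x h)

theorem hasSum_integral_smul_of_sum_le [Countable ι] (hp : ∀ i x, 0 ≤ p i x)
    (hpm : ∀ i, AEStronglyMeasurable (p i) μ) (hw : Integrable w μ)
    (hC : ∀ x, w x ≠ 0 → ∀ s : Finset ι, ∑ i ∈ s, p i x ≤ C) :
    HasSum (fun i ↦ ∫ x, p i x • w x ∂μ) (∫ x, (∑' i, p i x) • w x ∂μ) := by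
  simp only [← tsum_smul_const_of_sum_le (hp · _) (hC _)]
  exact hasSum_integral_of_summable_integral_norm (integrable_smul_of_sum_le hp hpm hw hC)
    (summable_integral_norm_smul_of_sum_le hp hpm hw hC)

end WeightedSeries

section Bergman

open scoped ComplexConjugate

variable {ι : Type*} {Ω : Set (Fin n → ℂ)} {φ : (Fin n → ℂ) → ℝ} {f h : (Fin n → ℂ) → ℂ}
  {e : ι → (Fin n → ℂ) → ℂ}

theorem memBergman_iff_integrableOn (hΩ : IsOpen Ω) (hφ : ContinuousOn φ Ω) :
    MemBergman Ω φ f ↔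
      DifferentiableOn ℂ f Ω ∧ IntegrableOn (fun z ↦ ‖f z‖ ^ 2 * Real.exp (-φ z)) Ω := by
  refine and_congr_right fun hf ↦ ?_
  have hmeas : AEStronglyMeasurable (fun z ↦ ‖f z‖ ^ 2 * Real.exp (-φ z)) (volume.restrict Ω) :=
    ((hf.continuousOn.norm.pow 2).mul hφ.neg.rexp).aestronglyMeasurable hΩ.measurableSet
  rw [IntegrableOn, Integrable, and_iff_right hmeas,
    hasFiniteIntegral_iff_ofReal (.of_forall fun z ↦ by positivity), wnorm2]

theorem MemBergman.integrableOn_mul_conj (hΩ : IsOpen Ω) (hφ : ContinuousOn φ Ω)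
    (hf : MemBergman Ω φ f) (hh : MemBergman Ω φ h) :
    IntegrableOn (fun z ↦ f z * conj (h z) * Real.exp (-φ z)) Ω := by
  rw [memBergman_iff_integrableOn hΩ hφ] at hf hh
  have hmeas : ContinuousOn (fun z ↦ f z * conj (h z) * Real.exp (-φ z)) Ω :=
    (hf.1.continuousOn.mul (continuous_conj.comp_continuousOn hh.1.continuousOn)).mul
      (continuous_ofReal.comp_continuousOn hφ.neg.rexp)
  refine (hf.2.add hh.2).mono' (hmeas.aestronglyMeasurable hΩ.measurableSet) <|
    .of_forall fun z ↦ ?_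
  simp only [norm_mul, RCLike.norm_conj, norm_real, Real.norm_eq_abs, Real.abs_exp, Pi.add_apply,
    ← add_mul]
  gcongr
  nlinarith [two_mul_le_add_sq ‖f z‖ ‖h z‖, norm_nonneg (f z), norm_nonneg (h z)]

theorem MemBergman.sum_mul (hΩ : IsOpen Ω) (hφ : ContinuousOn φ Ω)
    (he : ∀ j, MemBergman Ω φ (e j)) (c : ι → ℂ) (s : Finset ι) :
    MemBergman Ω φ (fun z ↦ ∑ j ∈ s, c j * e j z) := by
  simp only [memBergman_iff_integrableOn hΩ hφ] at he ⊢
  have hdiff : DifferentiableOn ℂ (fun z ↦ ∑ j ∈ s, c j * e j z) Ω :=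
    .fun_sum fun j _ ↦ (he j).1.const_mul (c j)
  have hdom : IntegrableOn
      (fun z ↦ ∑ j ∈ s, (s.card : ℝ) * ‖c j‖ ^ 2 * (‖e j z‖ ^ 2 * Real.exp (-φ z))) Ω :=
    integrable_finsetSum s fun j _ ↦ (he j).2.const_mul _
  refine ⟨hdiff, hdom.mono' (((hdiff.continuousOn.norm.pow 2).mul
    hφ.neg.rexp).aestronglyMeasurable hΩ.measurableSet) <| .of_forall fun z ↦ ?_⟩
  calc ‖‖∑ j ∈ s, c j * e j z‖ ^ 2 * Real.exp (-φ z)‖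
    _ = ‖∑ j ∈ s, c j * e j z‖ ^ 2 * Real.exp (-φ z) := Real.norm_of_nonneg (by positivity)
    _ ≤ (s.card * ∑ j ∈ s, ‖c j * e j z‖ ^ 2) * Real.exp (-φ z) := by
      gcongr
      exact (pow_le_pow_left₀ (norm_nonneg _) (norm_sum_le s _) 2).trans sq_sum_le_card_mul_sum_sq
    _ = _ := by
      simp only [norm_mul, mul_pow, Finset.mul_sum, Finset.sum_mul]
      exact Finset.sum_congr rfl fun j _ ↦ by ring

theorem wInner_self (f : (Fin n → ℂ) → ℂ) :
    wInner Ω φ f f = ∫ z in Ω, ‖f z‖ ^ 2 * Real.exp (-φ z) := by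
  simp only [wInner, mul_conj', ← ofReal_pow, ← ofReal_mul, integral_complex_ofReal]

theorem wInner_sum_mul_sum_mul (hΩ : IsOpen Ω) (hφ : ContinuousOn φ Ω)
    (he : ∀ j, MemBergman Ω φ (e j)) (c d : ι → ℂ) (s : Finset ι) :
    wInner Ω φ (fun z ↦ ∑ i ∈ s, c i * e i z) (fun z ↦ ∑ j ∈ s, d j * e j z) =
      ∑ i ∈ s, ∑ j ∈ s, c i * conj (d j) * wInner Ω φ (e i) (e j) := by
  have hint i j : IntegrableOn
      (fun z ↦ c i * conj (d j) * (e i z * conj (e j z) * Real.exp (-φ z))) Ω :=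
    ((he i).integrableOn_mul_conj hΩ hφ (he j)).const_mul _
  simp only [wInner, ← integral_const_mul]
  simp only [← integral_finsetSum s fun j _ ↦ hint _ j]
  rw [← integral_finsetSum s fun i _ ↦ integrable_finsetSum s fun j _ ↦ hint i j]
  congr! with z
  simp only [map_sum, map_mul, Finset.sum_mul, Finset.mul_sum]
  rw [Finset.sum_comm]
  exact Finset.sum_congr rfl fun i _ ↦ Finset.sum_congr rfl fun j _ ↦ by ring

variable [DecidableEq ι]

theorem setIntegral_norm_sq_sum_mul_of_orthonormal (hΩ : IsOpen Ω) (hφ : ContinuousOn φ Ω)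
    (he : ∀ j, MemBergman Ω φ (e j))
    (horth : ∀ i j, wInner Ω φ (e i) (e j) = if i = j then 1 else 0) (c : ι → ℂ) (s : Finset ι) :
    ∫ z in Ω, ‖∑ j ∈ s, c j * e j z‖ ^ 2 * Real.exp (-φ z) = ∑ j ∈ s, ‖c j‖ ^ 2 := by
  apply ofReal_injective
  rw [← wInner_self, wInner_sum_mul_sum_mul hΩ hφ he]
  simp +contextual [horth, mul_conj']

theorem exists_sum_norm_sq_le_of_orthonormal (hΩ : IsOpen Ω) (hφ : ContinuousOn φ Ω)
    (he : ∀ j, MemBergman Ω φ (e j))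
    (horth : ∀ i j, wInner Ω φ (e i) (e j) = if i = j then 1 else 0)
    {K : Set (Fin n → ℂ)} (hK : IsCompact K) (hKΩ : K ⊆ Ω) :
    ∃ C, ∀ a ∈ K, ∀ s : Finset ι, ∑ j ∈ s, ‖e j a‖ ^ 2 ≤ C := by
  obtain ⟨C, hC, hbound⟩ := exists_norm_pow_le_mul_setIntegral volume hΩ hK hKΩ hφ.neg.rexp
    (fun z _ ↦ Real.exp_pos (-φ z)) 2
  refine ⟨C, fun a ha s ↦ ?_⟩
  set S := ∑ j ∈ s, ‖e j a‖ ^ 2 with hS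
  -- `k` is the reproducing kernel at `a` of the span of the `e j`, so `k a = ‖k‖² = S`.
  let k : (Fin n → ℂ) → ℂ := fun z ↦ ∑ j ∈ s, conj (e j a) * e j z
  have hk := (memBergman_iff_integrableOn hΩ hφ).1 (.sum_mul hΩ hφ he (fun j ↦ conj (e j a)) s)
  have hka : k a = S := by simp [k, hS, conj_mul']
  have hknorm : ∫ z in Ω, ‖k z‖ ^ 2 * Real.exp (-φ z) = S := by
    simpa [hS] using
      setIntegral_norm_sq_sum_mul_of_orthonormal hΩ hφ he horth (fun j ↦ conj (e j a)) s
  have hS₀ : 0 ≤ S := Finset.sum_nonneg fun j _ ↦ by positivity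
  have hle : S ^ 2 ≤ C * S := by
    simpa [hka, hknorm, abs_of_nonneg hS₀] using hbound k hk.1 hk.2 a ha
  nlinarith

theorem toeplitz_trace_formula_general [Countable ι] (hΩ : IsOpen Ω) (hφ : ContinuousOn φ Ω)
    (he : ∀ j, MemBergman Ω φ (e j))
    (horth : ∀ i j, wInner Ω φ (e i) (e j) = if i = j then 1 else 0)
    {g : (Fin n → ℂ) → ℝ} {K : Set (Fin n → ℂ)} (hK : IsCompact K) (hKΩ : K ⊆ Ω)
    (hg : IntegrableOn g K) (hgK : Function.support g ⊆ K) :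
    Summable (fun j ↦ ∫ z in Ω, ‖e j z‖ ^ 2 * |g z| * Real.exp (-φ z)) ∧
    (∑' j, ∫ z in Ω, ‖e j z‖ ^ 2 * g z * Real.exp (-φ z)) =
      ∫ z in Ω, (∑' j, ‖e j z‖ ^ 2) * g z * Real.exp (-φ z) ∧
    IntegrableOn (fun z ↦ (∑' j, ‖e j z‖ ^ 2) * g z * Real.exp (-φ z)) Ω := by
  obtain ⟨C, hC⟩ := exists_sum_norm_sq_le_of_orthonormal hΩ hφ he horth hK hKΩ
  let w z := g z * Real.exp (-φ z)
  have hwK : Function.support w ⊆ K := (Function.support_mul_subset_left _ _).trans hgK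
  have hw : IntegrableOn w Ω :=
    ((integrableOn_iff_integrable_of_support_subset hwK).1
      (hg.mul_continuousOn (hφ.neg.rexp.mono hKΩ) hK)).integrableOn
  have hpos j z : 0 ≤ ‖e j z‖ ^ 2 := by positivity
  have hmeas j : AEStronglyMeasurable (fun z ↦ ‖e j z‖ ^ 2) (volume.restrict Ω) :=
    ((he j).1.continuousOn.norm.pow 2).aestronglyMeasurable hΩ.measurableSet
  have hCw z (hz : w z ≠ 0) := hC z (hwK hz)
  refine ⟨?_, ?_, ?_⟩
  · simpa [w, mul_assoc] using summable_integral_norm_smul_of_sum_le hpos hmeas hw hCw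
  · simpa [w, mul_assoc] using (hasSum_integral_smul_of_sum_le hpos hmeas hw hCw).tsum_eq
  · simpa [IntegrableOn, w, mul_assoc] using integrable_tsum_smul_of_sum_le hpos hmeas hw hCw

end Bergman

/-- Trace of a Toeplitz operator with compactly supported continuous symbol
`g` on a weighted Bergman space over a bounded domain: for a Hilbert basis `(e_j)` of `H(φ)`,
the series `∑_j ⟨P_φ(g e_j), e_j⟩_φ` (whose `j`-th term equals `∫_Ω g |e_j|² e^{-φ} dλ`, by the
defining property of the orthogonal projection `P_φ` and `e_j ∈ H(φ)`) converges absolutely and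
equals `∫_Ω (∑_j |e_j(z)|²) g(z) e^{-φ(z)} dλ(z) = ∫_Ω K_φ(z,z) g(z) e^{-φ(z)} dλ(z)`,
which is finite. -/
theorem toeplitz_trace_formula
    (Ω : Set (Fin n → ℂ)) (hΩo : IsOpen Ω) (hΩconn : IsConnected Ω)
    (hΩb : Bornology.IsBounded Ω)
    (φ : (Fin n → ℂ) → ℝ) (hφ : ContinuousOn φ Ω)
    (e : ℕ → (Fin n → ℂ) → ℂ)
    (hmem : ∀ j, MemBergman Ω φ (e j))
    (horth : ∀ i j, wInner Ω φ (e i) (e j) = if i = j then 1 else 0)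
    (hcomplete : ∀ f, MemBergman Ω φ f → (∀ j, wInner Ω φ f (e j) = 0) → ∀ z ∈ Ω, f z = 0)
    (g : (Fin n → ℂ) → ℝ) (hg : Continuous g) (hgc : HasCompactSupport g)
    (hgs : tsupport g ⊆ Ω) :
    Summable (fun j : ℕ => ∫ z in Ω, ‖e j z‖ ^ 2 * |g z| * Real.exp (-φ z)) ∧
    (∑' j : ℕ, ∫ z in Ω, ‖e j z‖ ^ 2 * g z * Real.exp (-φ z)) =
      ∫ z in Ω, (∑' j : ℕ, ‖e j z‖ ^ 2) * g z * Real.exp (-φ z) ∧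
    IntegrableOn (fun z => (∑' j : ℕ, ‖e j z‖ ^ 2) * g z * Real.exp (-φ z)) Ω := by
  exact toeplitz_trace_formula_general hΩo hφ hmem horth hgc hgs
    (hg.continuousOn.integrableOn_compact hgc) (subset_tsupport g)
end
end

section
/- Let Ω ⊂ ℂⁿ be a bounded domain, φ : Ω → ℝ continuous, u, v : Ω → ℝ continuous with compact support in Ω, so that H(φ) = H(φ+u) as sets. Then for every f ∈ H(φ): T_{φ,e^{−u}}( T_{φ+u,v} f ) = P_φ(v·e^{−u}·f), i.e. P_φ( e^{−u} · P_{φ+u}(v f) ) = P_φ( v e^{−u} f ); equivalently, on H(φ) the operator T_{φ,e^{−u}}^{−1} ∘ T_{φ, v e^{−u}} coincides with the Toeplitz operator T_{φ+u, v} with symbol v on H(φ+u). -/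
open MeasureTheory Complex Filter
open scoped ENNReal Topology BigOperators Real ComplexOrder

noncomputable section

variable {n : ℕ}

/-!
For a bounded `u` the norms of `L²(e^{-φ})` and `L²(e^{-(φ+u)})` are equivalent, so
`H(φ) = H(φ+u)`, while `⟨F, h⟩_{φ+u} = ⟨e^{-u} F, h⟩_φ`.  Hence `F - P_{φ+u} F ⟂ H(φ+u)` in
`L²(e^{-(φ+u)})` says exactly that `e^{-u} F` and `e^{-u} P_{φ+u} F` differ by an element orthogonal
to `H(φ)` in `L²(e^{-φ})`; the two therefore have the same image under `P_φ`.  The identity is the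
case `F = v f`.
-/

/-- Membership in the weighted space `L²(e^{-ψ} dμ)`.  It is expressed through the isometry
`f ↦ f e^{-ψ/2}` into `L²(μ)`, so that weights of different exponents live over the same measure. -/
def MemWeightedL2 {α : Type*} [MeasurableSpace α] (ψ : α → ℝ) (f : α → ℂ) (μ : Measure α) : Prop :=
  MemLp (fun x => f x * Real.exp (-ψ x / 2)) 2 μ

section WeightedL2

variable {α : Type*} [MeasurableSpace α] {μ : Measure α} {φ ψ u : α → ℝ} {c f g : α → ℂ}

lemma memLp_top_ofReal_exp (hu : MemLp u ∞ μ) :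
    MemLp (fun x => (Real.exp (u x) : ℂ)) ∞ μ := by
  suffices MemLp (fun x => Real.exp (u x)) ∞ μ from this.ofReal
  refine memLp_top_of_bound ?_ (Real.exp (lpNorm u ∞ μ)) ?_
  · exact Real.continuous_exp.comp_aestronglyMeasurable hu.aestronglyMeasurable
  · filter_upwards [ae_le_lpNorm_exponent_top hu] with x hx
    rw [Real.norm_of_nonneg (Real.exp_nonneg _)]
    exact Real.exp_le_exp.2 (Real.le_norm_self _ |>.trans hx)

lemma MemWeightedL2.sub (hf : MemWeightedL2 ψ f μ) (hg : MemWeightedL2 ψ g μ) :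
    MemWeightedL2 ψ (fun x => f x - g x) μ := by
  simp only [MemWeightedL2, sub_mul]
  exact MemLp.sub hf hg

lemma MemWeightedL2.memLp_top_mul (hf : MemWeightedL2 ψ f μ) (hc : MemLp c ∞ μ) :
    MemWeightedL2 ψ (fun x => c x * f x) μ := by
  simpa only [MemWeightedL2, mul_assoc] using MemLp.mul' (r := 2) hf hc

lemma MemWeightedL2.exp_neg_mul (hf : MemWeightedL2 ψ f μ) (hu : MemLp u ∞ μ) :
    MemWeightedL2 ψ (fun x => Real.exp (-u x) * f x) μ :=
  hf.memLp_top_mul (memLp_top_ofReal_exp hu.neg)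

lemma MemWeightedL2.add_weight (hf : MemWeightedL2 φ f μ) (hu : MemLp u ∞ μ) :
    MemWeightedL2 (fun x => φ x + u x) f μ := by
  have hsplit (x : α) : f x * Real.exp (-(φ x + u x) / 2) =
      Real.exp (-1 / 2 * u x) * (f x * Real.exp (-φ x / 2) : ℂ) := by
    rw [mul_left_comm, ← Complex.ofReal_mul, ← Real.exp_add]
    ring_nf
  simp only [MemWeightedL2, hsplit]
  exact MemLp.mul' hf (memLp_top_ofReal_exp (hu.const_mul (-1 / 2)))

lemma memWeightedL2_add_weight_iff (hu : MemLp u ∞ μ) :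
    MemWeightedL2 (fun x => φ x + u x) f μ ↔ MemWeightedL2 φ f μ :=
  ⟨fun hf => by simpa using! hf.add_weight hu.neg, fun hf => hf.add_weight hu⟩

lemma ofReal_exp_neg_eq_half_mul_half (t : ℝ) :
    (Real.exp (-t) : ℂ) = Real.exp (-t / 2) * Real.exp (-t / 2) := by
  rw [← Complex.ofReal_mul, ← Real.exp_add, add_halves]

lemma MemWeightedL2.integrable_mul_conj (hf : MemWeightedL2 ψ f μ) (hg : MemWeightedL2 ψ g μ) :
    Integrable (fun x => f x * (starRingEnd ℂ) (g x) * Real.exp (-ψ x)) μ := by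
  refine (MemLp.integrable_mul hf (MemLp.star hg)).congr (Eventually.of_forall fun x => ?_)
  simp only [Pi.mul_apply, Pi.star_apply, RCLike.star_def, map_mul, Complex.conj_ofReal,
    ofReal_exp_neg_eq_half_mul_half (ψ x)]
  ring

lemma MemWeightedL2.ae_eq_zero_of_integral_mul_conj_self (hf : MemWeightedL2 ψ f μ)
    (h0 : ∫ x, f x * (starRingEnd ℂ) (f x) * Real.exp (-ψ x) ∂μ = 0) : f =ᵐ[μ] 0 := by
  have hsq (x : α) : f x * (starRingEnd ℂ) (f x) * Real.exp (-ψ x) =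
      ((‖f x * Real.exp (-ψ x / 2)‖ ^ 2 : ℝ) : ℂ) := by
    rw [ofReal_exp_neg_eq_half_mul_half, Complex.ofReal_pow, ← Complex.mul_conj', map_mul,
      Complex.conj_ofReal]
    ring
  simp only [hsq] at h0
  rw [integral_complex_ofReal, Complex.ofReal_eq_zero,
    integral_eq_zero_iff_of_nonneg (fun _ => sq_nonneg _)
      (MemLp.integrable_norm_pow hf two_ne_zero)] at h0
  filter_upwards [h0] with x hx
  simpa [Real.exp_ne_zero] using hx

end WeightedL2

section Bergman

variable {Ω : Set (Fin n → ℂ)} {φ ψ u : (Fin n → ℂ) → ℝ} {F f g h : (Fin n → ℂ) → ℂ}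

lemma wInner_sub_left (hf : MemWeightedL2 ψ f (volume.restrict Ω))
    (hg : MemWeightedL2 ψ g (volume.restrict Ω)) (hh : MemWeightedL2 ψ h (volume.restrict Ω)) :
    wInner Ω ψ (fun z => f z - g z) h = wInner Ω ψ f h - wInner Ω ψ g h := by
  simp only [wInner, sub_mul]
  exact integral_sub (hf.integrable_mul_conj hh) (hg.integrable_mul_conj hh)

lemma wInner_add_weight :
    wInner Ω (fun z => φ z + u z) f h = wInner Ω φ (fun z => Real.exp (-u z) * f z) h := by
  refine integral_congr_ae (Eventually.of_forall fun z => ?_)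
  simp only [neg_add, Real.exp_add, Complex.ofReal_mul]
  ring

lemma wnorm2_eq_lintegral_enorm_sq :
    wnorm2 Ω ψ f = ∫⁻ z in Ω, ‖f z * Real.exp (-ψ z / 2)‖ₑ ^ 2 := by
  refine lintegral_congr fun z => ?_
  rw [← ofReal_norm, ← ENNReal.ofReal_pow (norm_nonneg _), norm_mul, Complex.norm_real,
    Real.norm_of_nonneg (Real.exp_nonneg _), mul_pow, ← Real.exp_nat_mul]
  congr 3
  push_cast
  ring

lemma memBergman_iff (hΩ : MeasurableSet Ω) (hψ : AEMeasurable ψ (volume.restrict Ω)) :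
    MemBergman Ω ψ f ↔ DifferentiableOn ℂ f Ω ∧ MemWeightedL2 ψ f (volume.restrict Ω) := by
  refine and_congr_right fun hf => ?_
  have hmeas : AEStronglyMeasurable (fun z => f z * Real.exp (-ψ z / 2)) (volume.restrict Ω) := by
    have := hf.continuousOn.aestronglyMeasurable (μ := volume) hΩ
    fun_prop
  rw [MemWeightedL2, MemLp, and_iff_right hmeas,
    eLpNorm_lt_top_iff_lintegral_rpow_enorm_lt_top two_ne_zero ENNReal.ofNat_ne_top,
    wnorm2_eq_lintegral_enorm_sq]
  simp

lemma memBergman_add_weight_iff (hΩ : MeasurableSet Ω) (hφ : AEMeasurable φ (volume.restrict Ω))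
    (hu : MemLp u ∞ (volume.restrict Ω)) :
    MemBergman Ω (fun z => φ z + u z) f ↔ MemBergman Ω φ f := by
  have hφu : AEMeasurable (fun z => φ z + u z) (volume.restrict Ω) :=
    hφ.add hu.aestronglyMeasurable.aemeasurable
  rw [memBergman_iff hΩ hφu, memBergman_iff hΩ hφ, memWeightedL2_add_weight_iff hu]

/-- `g = P_ψ F`: the orthogonal projection of `F ∈ L²(e^{-ψ} dλ)` onto the Bergman space `H(ψ)`,
described by its characteristic property.  Square-integrability of `F` is assumed separately: for
other `F` the integral defining `wInner` may take the junk value `0`. -/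
def IsBergmanProjection (Ω : Set (Fin n → ℂ)) (ψ : (Fin n → ℂ) → ℝ) (F g : (Fin n → ℂ) → ℂ) :
    Prop :=
  MemBergman Ω ψ g ∧ ∀ h, MemBergman Ω ψ h → wInner Ω ψ (fun z => F z - g z) h = 0

lemma IsBergmanProjection.eqOn (hΩ : IsOpen Ω) (hψ : AEMeasurable ψ (volume.restrict Ω))
    (hF : MemWeightedL2 ψ F (volume.restrict Ω)) (hf : IsBergmanProjection Ω ψ F f)
    (hg : IsBergmanProjection Ω ψ F g) : Set.EqOn f g Ω := by
  have mem_iff {k} := memBergman_iff (f := k) hΩ.measurableSet hψ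
  obtain ⟨hfd, hfL2⟩ := mem_iff.1 hf.1
  obtain ⟨hgd, hgL2⟩ := mem_iff.1 hg.1
  have hdL2 := hfL2.sub hgL2
  have hd : MemBergman Ω ψ (fun z => f z - g z) := mem_iff.2 ⟨hfd.sub hgd, hdL2⟩
  have horth : wInner Ω ψ (fun z => f z - g z) (fun z => f z - g z) = 0 :=
    calc wInner Ω ψ (fun z => f z - g z) (fun z => f z - g z)
      _ = wInner Ω ψ (fun z => (F z - g z) - (F z - f z)) (fun z => f z - g z) := by
        simp only [sub_sub_sub_cancel_left]
      _ = 0 := by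
        rw [wInner_sub_left (hF.sub hgL2) (hF.sub hfL2) hdL2, hg.2 _ hd, hf.2 _ hd, sub_zero]
  have hae : f =ᵐ[volume.restrict Ω] g := by
    filter_upwards [hdL2.ae_eq_zero_of_integral_mul_conj_self horth] with z hz
    exact sub_eq_zero.1 hz
  exact Measure.eqOn_open_of_ae_eq hae hΩ hfd.continuousOn hgd.continuousOn

lemma IsBergmanProjection.exp_neg_mul_trans {g' : (Fin n → ℂ) → ℂ} (hΩ : MeasurableSet Ω)
    (hφ : AEMeasurable φ (volume.restrict Ω)) (hu : MemLp u ∞ (volume.restrict Ω))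
    (hF : MemWeightedL2 φ F (volume.restrict Ω))
    (hg : IsBergmanProjection Ω (fun z => φ z + u z) F g)
    (hg' : IsBergmanProjection Ω φ (fun z => Real.exp (-u z) * g z) g') :
    IsBergmanProjection Ω φ (fun z => Real.exp (-u z) * F z) g' := by
  have weight_iff {k} := memBergman_add_weight_iff (f := k) hΩ hφ hu
  have mem_L2 {k} (hk : MemBergman Ω φ k) := ((memBergman_iff hΩ hφ).1 hk).2
  have hFL2 := hF.exp_neg_mul hu
  have hgL2 := (mem_L2 (weight_iff.1 hg.1)).exp_neg_mul hu
  have hg'L2 := mem_L2 hg'.1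
  refine ⟨hg'.1, fun h hh => ?_⟩
  have hhL2 := mem_L2 hh
  calc wInner Ω φ (fun z => Real.exp (-u z) * F z - g' z) h
    _ = wInner Ω φ (fun z => Real.exp (-u z) * F z - Real.exp (-u z) * g z) h +
        wInner Ω φ (fun z => Real.exp (-u z) * g z - g' z) h := by
      rw [wInner_sub_left hFL2 hgL2 hhL2, wInner_sub_left hgL2 hg'L2 hhL2,
        wInner_sub_left hFL2 hg'L2 hhL2, sub_add_sub_cancel]
    _ = wInner Ω (fun z => φ z + u z) (fun z => F z - g z) h + 0 := by
      rw [hg'.2 h hh, wInner_add_weight]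
      simp only [mul_sub]
    _ = 0 := by rw [hg.2 h (weight_iff.2 hh), add_zero]

theorem toeplitz_composition_identity_general {v g₁ g₂ g₃ : (Fin n → ℂ) → ℂ} (hΩ : IsOpen Ω)
    (hφ : AEMeasurable φ (volume.restrict Ω)) (hu : MemLp u ∞ (volume.restrict Ω))
    (hv : MemLp v ∞ (volume.restrict Ω)) (hf : MemWeightedL2 φ f (volume.restrict Ω))
    (hg₁ : IsBergmanProjection Ω (fun z => φ z + u z) (fun z => v z * f z) g₁)
    (hg₂ : IsBergmanProjection Ω φ (fun z => Real.exp (-u z) * g₁ z) g₂)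
    (hg₃ : IsBergmanProjection Ω φ (fun z => v z * Real.exp (-u z) * f z) g₃) :
    Set.EqOn g₂ g₃ Ω := by
  have hvf := hf.memLp_top_mul hv
  simp only [mul_assoc, mul_left_comm (v _)] at hg₃
  exact (hg₁.exp_neg_mul_trans hΩ.measurableSet hφ hu hvf hg₂).eqOn hΩ hφ (hvf.exp_neg_mul hu) hg₃

end Bergman

/-- For `f ∈ H(φ)`: `T_{φ,e^{-u}}(T_{φ+u,v} f) = P_φ(v e^{-u} f)`, i.e.
`P_φ(e^{-u} P_{φ+u}(v f)) = P_φ(v e^{-u} f)`.  Here `g₁ = P_{φ+u}(v f)`, `g₂ = P_φ(e^{-u} g₁)`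
and `g₃ = P_φ(v e^{-u} f)` are encoded by the defining property of the orthogonal projections
(membership plus orthogonality of the difference), and the conclusion is `g₂ = g₃` on `Ω`. -/
theorem toeplitz_composition_identity
    (Ω : Set (Fin n → ℂ)) (hΩo : IsOpen Ω) (hΩconn : IsConnected Ω)
    (hΩb : Bornology.IsBounded Ω)
    (φ : (Fin n → ℂ) → ℝ) (hφ : ContinuousOn φ Ω)
    (u v : (Fin n → ℂ) → ℝ)
    (hu : Continuous u) (huc : HasCompactSupport u) (hus : tsupport u ⊆ Ω)
    (hv : Continuous v) (hvc : HasCompactSupport v) (hvs : tsupport v ⊆ Ω)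
    (f g₁ g₂ g₃ : (Fin n → ℂ) → ℂ)
    (hf : MemBergman Ω φ f)
    (hg₁ : MemBergman Ω (fun z => φ z + u z) g₁)
    (hg₁proj : ∀ h, MemBergman Ω (fun z => φ z + u z) h →
      ∫ z in Ω, (v z * f z - g₁ z) * (starRingEnd ℂ) (h z) *
        Real.exp (-(φ z + u z)) = 0)
    (hg₂ : MemBergman Ω φ g₂)
    (hg₂proj : ∀ h, MemBergman Ω φ h →
      ∫ z in Ω, (Real.exp (-u z) * g₁ z - g₂ z) * (starRingEnd ℂ) (h z) *
        Real.exp (-φ z) = 0)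
    (hg₃ : MemBergman Ω φ g₃)
    (hg₃proj : ∀ h, MemBergman Ω φ h →
      ∫ z in Ω, (v z * Real.exp (-u z) * f z - g₃ z) * (starRingEnd ℂ) (h z) *
        Real.exp (-φ z) = 0) :
    ∀ z ∈ Ω, g₂ z = g₃ z := by
  have hφm := hφ.aemeasurable (μ := volume) hΩo.measurableSet
  exact toeplitz_composition_identity_general hΩo hφm
    (hu.memLp_of_hasCompactSupport huc) (hv.memLp_of_hasCompactSupport hvc).ofReal
    ((memBergman_iff hΩo.measurableSet hφm).1 hf).2
    ⟨hg₁, hg₁proj⟩ ⟨hg₂, hg₂proj⟩ ⟨hg₃, hg₃proj⟩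
end
end
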